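/- The centre of T(v) is isomorphic as a K-algebra to K[A,B,H]/(AB − H^n), via the map sending A ↦ a^p, B ↦ b^p and H ↦ h^p − h. In other words, the centre of T(v) is isomorphic to the algebra of functions on a Kleinian singularity of type A_{n−1}. -/

import Mathlib

/-!
The algebra `T(v)` embeds in the skew Laurent ring `K[h][t, t⁻¹]` with `t f(h) = f(h - 1) t`, via
`a ↦ t`, `b ↦ v(h) t⁻¹`. The embedding is realised as the action `rep` of `T(v)` on `∏ᵢ K[h] tⁱ`
by left multiplication, evaluated at `1` (`coord`).

Write `uᵢ` for `a ^ i` when `i ≥ 0` and for `b ^ (-i)` when `i ≤ 0`. Every element of `T(v)` is a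
sum `∑ uᵢ fᵢ(h)` (`IsGWATriple.exists_gwaNormal`), whose coordinate in degree `i` is
`cᵢ(h) fᵢ(h - i)` with `cᵢ ≠ 0` (`coord_gwaNormal`). If the element is central, commuting with `h`
forces `i = 0` in `K` whenever `fᵢ ≠ 0`, and commuting with `a` then forces `fᵢ(h + 1) = fᵢ(h)`
(`central_coeff`). Translation-invariant polynomials are polynomials in `h ^ p - h`
(`exists_comp_of_comp_add_one`), so the centre is generated by `a ^ p`, `b ^ p`, `h ^ p - h`.

The relation `a ^ p b ^ p = (h ^ p - h) ^ n` holds because `b ^ p a ^ p = ∏ⱼ v(h + j)`, with `j`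
running over the prime field, where all roots of `v` lie (`prod_comp_translates`). There are no
further relations: `K[A,B,H]/(AB - H ^ n)` satisfies the same kind of relations as `T(v)` with
trivial translation, so its elements also have normal forms `∑ Uᵢ gᵢ(H)`, and the coordinates of
the image in degrees `p i` determine all the `gᵢ` (`coord_gwaNormal_pow`).
-/

/-!
The algebra `T(v)` of Hodges: the quotient of the free algebra `K⟨a,b,h⟩` by the two-sided
ideal generated by `ha − ah − a`, `hb − bh + b`, `ba − v(h)`, `ab − v(h−1)`.
We realise it as a `RingQuot` of the free algebra on three generators
(`0 ↦ a`, `1 ↦ b`, `2 ↦ h`).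
-/

open Polynomial

noncomputable section

/-- the generator `a` of the free algebra `K⟨a,b,h⟩` -/
def fa (K : Type) [Field K] : FreeAlgebra K (Fin 3) := FreeAlgebra.ι K 0

/-- the generator `b` of the free algebra `K⟨a,b,h⟩` -/
def fb (K : Type) [Field K] : FreeAlgebra K (Fin 3) := FreeAlgebra.ι K 1

/-- the generator `h` of the free algebra `K⟨a,b,h⟩` -/
def fh (K : Type) [Field K] : FreeAlgebra K (Fin 3) := FreeAlgebra.ι K 2

/-- The defining relations of `T(v)`. -/
inductive TvRel (K : Type) [Field K] (v : K[X]) :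
    FreeAlgebra K (Fin 3) → FreeAlgebra K (Fin 3) → Prop
  | ha : TvRel K v (fh K * fa K) (fa K * (fh K + 1))
  | hb : TvRel K v (fh K * fb K) (fb K * (fh K - 1))
  | ba : TvRel K v (fb K * fa K) (aeval (fh K) v)
  | ab : TvRel K v (fa K * fb K) (aeval (fh K - 1) v)

/-- Hodges' algebra `T(v)`. -/
abbrev Tv (K : Type) [Field K] (v : K[X]) := RingQuot (TvRel K v)

/-- the image of `a` in `T(v)` -/
def Ta (K : Type) [Field K] (v : K[X]) : Tv K v := RingQuot.mkAlgHom K (TvRel K v) (fa K)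

/-- the image of `b` in `T(v)` -/
def Tb (K : Type) [Field K] (v : K[X]) : Tv K v := RingQuot.mkAlgHom K (TvRel K v) (fb K)

/-- the image of `h` in `T(v)` -/
def Th (K : Type) [Field K] (v : K[X]) : Tv K v := RingQuot.mkAlgHom K (TvRel K v) (fh K)

/-! ### Translation-invariant polynomials -/

section ArtinSchreier

variable {K : Type} [Field K] {p : ℕ} [Fact p.Prime] [CharP K p]


theorem natCast_injOn (K : Type) [Field K] (p : ℕ) [CharP K p] : Set.InjOn (fun j : ℕ => (j : K)) (Finset.range p) := by
  intro i hi j hj h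
  simp only [Finset.coe_range, Set.mem_Iio] at hi hj
  exact ((CharP.natCast_eq_natCast K p).mp h).eq_of_lt_of_lt hi hj

theorem natCast_pow_char (j : ℕ) : (j : K) ^ p = j := by
  rw [← frobenius_def]
  exact map_natCast (frobenius K p) j

theorem prod_range_X_sub :
    ∏ j ∈ Finset.range p, (X - C (j : K)) = X ^ p - X := by
  have hp := (Fact.out : p.Prime)
  have hm : (X ^ p - X : K[X]).Monic := by
    apply monic_X_pow_sub
    rw [degree_X]; exact_mod_cast hp.one_lt
  have hd : (X ^ p - X : K[X]).natDegree = p :=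
    FiniteField.X_pow_card_sub_X_natDegree_eq K hp.one_lt
  have hm2 : (∏ j ∈ Finset.range p, (X - C (j : K))).Monic := monic_prod_X_sub_C _ _
  have hd2 : (∏ j ∈ Finset.range p, (X - C (j : K))).natDegree = p := by
    rw [natDegree_prod_of_monic _ _ (fun j _ => monic_X_sub_C _)]
    simp only [natDegree_X_sub_C, Finset.sum_const, Finset.card_range, smul_eq_mul, mul_one]
  refine eq_of_degree_sub_lt_of_eval_index_eq (Finset.range p) (natCast_injOn K p) ?_ ?_
  · rw [Finset.card_range]
    refine (degree_sub_lt_left ?_ hm2.ne_zero ?_).trans_le ?_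
    · rw [degree_eq_natDegree hm.ne_zero, degree_eq_natDegree hm2.ne_zero, hd, hd2]
    · rw [hm, hm2]
    · rw [degree_eq_natDegree hm2.ne_zero, hd2]
  · intro j hj
    simp only [eval_sub, eval_pow, eval_X, natCast_pow_char, sub_self]
    rw [eval_prod]
    exact Finset.prod_eq_zero hj (by simp)

theorem artinSchreier_comp_add (m : ℕ) :
    (X ^ p - X : K[X]).comp (X + C (m : K)) = X ^ p - X := by
  simp only [sub_comp, pow_comp, X_comp]
  rw [add_pow_char, ← C_pow, natCast_pow_char]; ring

theorem artinSchreier_comp_sub (m : ℕ) :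
    (X ^ p - X : K[X]).comp (X - C (m : K)) = X ^ p - X := by
  simp only [sub_comp, pow_comp, X_comp]
  rw [sub_pow_char, ← C_pow, natCast_pow_char]; ring

theorem prod_range_X_add :
    ∏ j ∈ Finset.range p, (X + C (j : K)) = X ^ p - X := by
  rw [← prod_range_X_sub (K := K) (p := p), ← Finset.prod_range_reflect]
  have h1 : (X ^ p - X : K[X]).comp (X + C ((p - 1 : ℕ) : K)) = X ^ p - X :=
    artinSchreier_comp_add _
  rw [← prod_range_X_sub (K := K) (p := p), prod_comp] at h1
  rw [← h1]
  refine Finset.prod_congr rfl fun j hj => ?_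
  have hj := Finset.mem_range.mp hj
  rw [Nat.cast_sub (by omega)]
  simp; ring

/-- Translation-invariant polynomials are polynomials in `X ^ p - X`: subtracting the constant
value on the prime field leaves a multiple of `X ^ p - X`, whose cofactor is again invariant. -/
theorem exists_comp_of_comp_add_one (f : K[X]) (hf : f.comp (X + 1) = f) :
    ∃ g : K[X], f = g.comp (X ^ p - X) := by
  have hp := (Fact.out : p.Prime)
  have hm : (X ^ p - X : K[X]).Monic := by
    apply monic_X_pow_sub
    rw [degree_X]; exact_mod_cast hp.one_lt
  have hd : (X ^ p - X : K[X]).natDegree = p :=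
    FiniteField.X_pow_card_sub_X_natDegree_eq K hp.one_lt
  induction hN : f.natDegree using Nat.strong_induction_on generalizing f with
  | _ N ih =>
  by_cases hc : f.natDegree = 0
  · exact ⟨f, by rw [eq_C_of_natDegree_eq_zero hc, C_comp]⟩
  -- `f` takes the same value at all points of the prime field
  have hev : ∀ j : ℕ, f.eval (j : K) = f.eval 0 := by
    intro j
    induction j with
    | zero => simp
    | succ j ihj =>
      rw [← ihj]
      conv_rhs => rw [← hf]
      simp
  have hdvd : (X ^ p - X : K[X]) ∣ f - C (f.eval 0) := by
    rw [← prod_range_X_sub]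
    refine Finset.prod_dvd_of_coprime ?_ ?_
    · intro i hi j hj hij
      refine isCoprime_X_sub_C_of_isUnit_sub ?_
      refine (sub_ne_zero.mpr fun h => hij (natCast_injOn K p hi hj h)).isUnit
    · intro j _
      rw [dvd_iff_isRoot]
      simp [hev]
  obtain ⟨q, hq⟩ := hdvd
  have hq0 : q ≠ 0 := by
    rintro rfl
    rw [mul_zero, sub_eq_zero] at hq
    exact hc (by rw [hq, natDegree_C])
  have hdeg : f.natDegree = p + q.natDegree := by
    rw [← natDegree_sub_C (a := f.eval 0), hq, hm.natDegree_mul' hq0, hd]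
  have hinv : q.comp (X + 1) = q := by
    have h1 := congrArg (fun r : K[X] => r.comp (X + 1)) hq
    beta_reduce at h1
    rw [mul_comp, sub_comp, hf, C_comp] at h1
    have h2 := artinSchreier_comp_add (K := K) (p := p) 1
    simp only [Nat.cast_one, C_1] at h2
    rw [h2, hq] at h1
    exact (mul_left_cancel₀ hm.ne_zero h1).symm
  obtain ⟨g, hg⟩ := ih q.natDegree (by have := hp.pos; omega) q hinv rfl
  refine ⟨X * g + C (f.eval 0), ?_⟩
  rw [add_comp, mul_comp, X_comp, C_comp, ← hg, ← hq]; ring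

/-- Each root `m` of `v` lies in the prime field and so contributes
`∏ⱼ (X + j - m) = X ^ p - X`. -/
theorem prod_comp_translates [IsAlgClosed K] (v : K[X]) (hmonic : v.Monic)
    (hroots : ∀ x : K, v.IsRoot x → ∃ m : ℕ, (m : K) = x) :
    ∏ j ∈ Finset.range p, v.comp (X + C (j : K)) = (X ^ p - X) ^ v.natDegree := by
  have hs := IsAlgClosed.splits v
  have key : ∀ s : Multiset K, (∀ x ∈ s, ∃ m : ℕ, (m : K) = x) →
      ∏ j ∈ Finset.range p, ((s.map fun x => X - C x).prod).comp (X + C (j : K))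
        = (X ^ p - X) ^ s.card := by
    intro s
    induction s using Multiset.induction_on with
    | empty => simp
    | cons x s ih =>
      intro h
      obtain ⟨m, rfl⟩ := h x (Multiset.mem_cons_self _ _)
      simp only [Multiset.map_cons, Multiset.prod_cons, mul_comp, Finset.prod_mul_distrib,
        Multiset.card_cons]
      rw [ih fun y hy => h y (Multiset.mem_cons_of_mem hy), pow_succ',
        ← artinSchreier_comp_sub (K := K) (p := p) m]
      congr 1
      rw [← prod_range_X_add, prod_comp]
      refine Finset.prod_congr rfl fun j _ => ?_
      simp; ring
  conv_lhs => rw [hs.eq_prod_roots_of_monic hmonic]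
  rw [key _ fun x hx => hroots x (isRoot_of_mem_roots hx), hs.natDegree_eq_card_roots]

end ArtinSchreier

/-! ### Normal forms in generalized Weyl algebras -/

section GWA

/-- The triple `(x, y, w)` satisfies the relations of the generalized Weyl algebra over `K[w]`
with translation `w ↦ w + c` and defining polynomial `v`. For `c = 1` these are the relations
of `T(v)`; for `c = 0` and `v = X ^ n` those of the Kleinian singularity `x y = w ^ n`. -/
structure IsGWATriple {K C : Type} [Field K] [Ring C] [Algebra K C] (c : K) (v : K[X])
    (x y w : C) : Prop where
  wx : w * x = x * (w + algebraMap K C c)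
  wy : w * y = y * (w - algebraMap K C c)
  yx : y * x = aeval w v
  xy : x * y = aeval w (v.comp (X - Polynomial.C c))

variable {K R : Type} [Field K] [Ring R] [Algebra K R]

/-- The monomial of degree `i`: `x ^ i` for `i ≥ 0` and `y ^ (-i)` for `i ≤ 0`. -/
def gwaMonomial (x y : R) (i : ℤ) : R := x ^ i.toNat * y ^ (-i).toNat

theorem gwaMonomial_natCast (x y : R) (k : ℕ) : gwaMonomial x y k = x ^ k := by
  simp [gwaMonomial]

theorem gwaMonomial_neg_natCast (x y : R) (k : ℕ) : gwaMonomial x y (-k) = y ^ k := by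
  simp [gwaMonomial]

theorem gwaMonomial_pow (x y : R) (p : ℕ) (i : ℤ) :
    gwaMonomial (x ^ p) (y ^ p) i = gwaMonomial x y (p * i) := by
  obtain ⟨k, rfl | rfl⟩ := i.eq_nat_or_neg
  · rw [gwaMonomial_natCast, ← Nat.cast_mul, gwaMonomial_natCast, pow_mul]
  · rw [gwaMonomial_neg_natCast, mul_neg, ← Nat.cast_mul, gwaMonomial_neg_natCast, pow_mul]

/-- The normal form map `∑ fᵢ tⁱ ↦ ∑ uᵢ fᵢ(w)`, with `uᵢ` the monomial of degree `i`. -/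
def gwaNormal (x y w : R) (F : ℤ →₀ K[X]) : R :=
  F.sum fun i f => gwaMonomial x y i * aeval w f

theorem gwaNormal_single (x y w : R) (i : ℤ) (f : K[X]) :
    gwaNormal x y w (Finsupp.single i f) = gwaMonomial x y i * aeval w f := by
  simp [gwaNormal]

theorem gwaNormal_add (x y w : R) (F G : ℤ →₀ K[X]) :
    gwaNormal x y w (F + G) = gwaNormal x y w F + gwaNormal x y w G := by
  unfold gwaNormal
  exact Finsupp.sum_add_index' (by simp) (by simp [mul_add])

theorem gwaNormal_smul (x y w : R) (r : K) (F : ℤ →₀ K[X]) :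
    gwaNormal x y w (r • F) = r • gwaNormal x y w F := by
  unfold gwaNormal
  rw [Finsupp.sum_smul_index' (by simp), Finsupp.smul_sum]
  simp

theorem map_gwaNormal {S : Type} [Ring S] [Algebra K S] (φ : R →ₐ[K] S) (x y w : R)
    (F : ℤ →₀ K[X]) : φ (gwaNormal x y w F) = gwaNormal (φ x) (φ y) (φ w) F := by
  simp [gwaNormal, Finsupp.sum, gwaMonomial, aeval_algHom_apply]

variable {c : K} {v : K[X]} {x y w : R}

namespace IsGWATriple

theorem aeval_mul_x (h : IsGWATriple c v x y w) (f : K[X]) :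
    aeval w f * x = x * aeval w (f.comp (X + C c)) := by
  induction f using Polynomial.induction_on' with
  | add f g hf hg => simp only [add_comp, map_add, add_mul, mul_add, hf, hg]
  | monomial k r =>
    induction k with
    | zero => simp [Algebra.commutes]
    | succ k ih =>
      rw [← monomial_mul_X, map_mul, aeval_X, mul_assoc, h.wx, ← mul_assoc, ih, mul_comp,
        X_comp, map_mul, mul_assoc]
      simp

theorem aeval_mul_y (h : IsGWATriple c v x y w) (f : K[X]) :
    aeval w f * y = y * aeval w (f.comp (X - C c)) := by
  induction f using Polynomial.induction_on' with
  | add f g hf hg => simp only [add_comp, map_add, add_mul, mul_add, hf, hg]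
  | monomial k r =>
    induction k with
    | zero => simp [Algebra.commutes]
    | succ k ih =>
      rw [← monomial_mul_X, map_mul, aeval_X, mul_assoc, h.wy, ← mul_assoc, ih, mul_comp,
        X_comp, map_mul, mul_assoc]
      simp

theorem aeval_mul_x_pow (h : IsGWATriple c v x y w) (f : K[X]) (k : ℕ) :
    aeval w f * x ^ k = x ^ k * aeval w (f.comp (X + C (k * c))) := by
  induction k with
  | zero => simp
  | succ k ih =>
    rw [pow_succ, ← mul_assoc, ih, mul_assoc, h.aeval_mul_x, comp_assoc, mul_assoc]
    congr 4
    simp; ring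

theorem aeval_mul_y_pow (h : IsGWATriple c v x y w) (f : K[X]) (k : ℕ) :
    aeval w f * y ^ k = y ^ k * aeval w (f.comp (X - C (k * c))) := by
  induction k with
  | zero => simp
  | succ k ih =>
    rw [pow_succ, ← mul_assoc, ih, mul_assoc, h.aeval_mul_y, comp_assoc, mul_assoc]
    congr 4
    simp; ring

theorem y_pow_mul_x_pow (h : IsGWATriple c v x y w) (k : ℕ) :
    y ^ k * x ^ k = aeval w (∏ j ∈ Finset.range k, v.comp (X + C (j * c))) := by
  induction k with
  | zero => simp
  | succ k ih =>
    rw [pow_succ, pow_succ', mul_assoc, ← mul_assoc y, h.yx, h.aeval_mul_x_pow, ← mul_assoc, ih,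
      Finset.prod_range_succ, map_mul (aeval w)]

theorem exists_aeval_mul_monomial (h : IsGWATriple c v x y w) (i : ℤ) (f : K[X]) :
    ∃ g : K[X], aeval w f * gwaMonomial x y i = gwaMonomial x y i * aeval w g := by
  obtain ⟨k, rfl | rfl⟩ := i.eq_nat_or_neg
  · simp only [gwaMonomial_natCast]
    exact ⟨_, h.aeval_mul_x_pow f k⟩
  · simp only [gwaMonomial_neg_natCast]
    exact ⟨_, h.aeval_mul_y_pow f k⟩

theorem exists_x_mul_monomial (h : IsGWATriple c v x y w) (i : ℤ) :
    ∃ (j : ℤ) (g : K[X]), x * gwaMonomial x y i = gwaMonomial x y j * aeval w g := by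
  obtain ⟨k, rfl | rfl⟩ := i.eq_nat_or_neg
  · exact ⟨(k + 1 : ℕ), 1, by simp only [gwaMonomial_natCast, pow_succ', map_one, mul_one]⟩
  · cases k with
    | zero => exact ⟨1, 1, by simp [gwaMonomial]⟩
    | succ k =>
      refine ⟨-k, (v.comp (X - C c)).comp (X - C (k * c)), ?_⟩
      simp only [gwaMonomial_neg_natCast]
      rw [pow_succ', ← mul_assoc, h.xy, h.aeval_mul_y_pow]

theorem exists_y_mul_monomial (h : IsGWATriple c v x y w) (i : ℤ) :
    ∃ (j : ℤ) (g : K[X]), y * gwaMonomial x y i = gwaMonomial x y j * aeval w g := by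
  obtain ⟨k, rfl | rfl⟩ := i.eq_nat_or_neg
  · cases k with
    | zero => exact ⟨-1, 1, by simp [gwaMonomial]⟩
    | succ k =>
      refine ⟨k, v.comp (X + C (k * c)), ?_⟩
      simp only [gwaMonomial_natCast]
      rw [pow_succ', ← mul_assoc, h.yx, h.aeval_mul_x_pow]
  · exact ⟨-(k + 1 : ℕ), 1, by simp only [gwaMonomial_neg_natCast, pow_succ', map_one, mul_one]⟩

/-- Normal forms exist: the span of the `uᵢ f(w)` contains `1` and is stable under left
multiplication by the generators. -/
theorem exists_gwaNormal (h : IsGWATriple c v x y w)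
    (hgen : Algebra.adjoin K (Set.range ![x, y, w]) = ⊤) (z : R) :
    ∃ F : ℤ →₀ K[X], z = gwaNormal x y w F := by
  have step : ∀ u : R, (∀ i (f : K[X]), ∃ F : ℤ →₀ K[X],
      u * (gwaMonomial x y i * aeval w f) = gwaNormal x y w F) →
      ∀ F : ℤ →₀ K[X], ∃ G : ℤ →₀ K[X], u * gwaNormal x y w F = gwaNormal x y w G := by
    intro u hu F
    induction F using Finsupp.induction_linear with
    | zero => exact ⟨0, by simp [gwaNormal]⟩
    | add F G hF hG =>
      obtain ⟨F', hF⟩ := hF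
      obtain ⟨G', hG⟩ := hG
      exact ⟨F' + G', by rw [gwaNormal_add, gwaNormal_add, mul_add, hF, hG]⟩
    | single i f => rw [gwaNormal_single]; exact hu i f
  have hz : ∀ F : ℤ →₀ K[X], ∃ G : ℤ →₀ K[X], z * gwaNormal x y w F = gwaNormal x y w G := by
    have hmem : z ∈ Algebra.adjoin K (Set.range ![x, y, w]) := hgen ▸ Algebra.mem_top
    induction hmem using Algebra.adjoin_induction with
    | mem u hu =>
      apply step
      intro i f
      obtain ⟨k, rfl⟩ := hu
      fin_cases k
      · obtain ⟨j, g, hg⟩ := h.exists_x_mul_monomial i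
        exact ⟨Finsupp.single j (g * f), by
          rw [gwaNormal_single, map_mul, ← mul_assoc, ← mul_assoc]
          exact congrArg (· * aeval w f) hg⟩
      · obtain ⟨j, g, hg⟩ := h.exists_y_mul_monomial i
        exact ⟨Finsupp.single j (g * f), by
          rw [gwaNormal_single, map_mul, ← mul_assoc, ← mul_assoc]
          exact congrArg (· * aeval w f) hg⟩
      · obtain ⟨g, hg⟩ := h.exists_aeval_mul_monomial i X
        rw [aeval_X] at hg
        exact ⟨Finsupp.single i (g * f), by
          rw [gwaNormal_single, map_mul, ← mul_assoc, ← mul_assoc]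
          exact congrArg (· * aeval w f) hg⟩
    | algebraMap r =>
      intro F
      exact ⟨r • F, by rw [gwaNormal_smul, Algebra.smul_def]⟩
    | add a b _ _ ha hb =>
      intro F
      obtain ⟨F', hF⟩ := ha F
      obtain ⟨G', hG⟩ := hb F
      exact ⟨F' + G', by rw [gwaNormal_add, add_mul, hF, hG]⟩
    | mul a b _ _ ha hb =>
      intro F
      obtain ⟨F', hF⟩ := hb F
      obtain ⟨G', hG⟩ := ha F'
      exact ⟨G', by rw [mul_assoc, hF, hG]⟩
  obtain ⟨G, hG⟩ := hz (Finsupp.single 0 1)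
  exact ⟨G, by rw [← hG, gwaNormal_single]; simp [gwaMonomial]⟩

end IsGWATriple

end GWA

/-! ### The representation in the skew Laurent ring -/

section Representation

variable {K : Type} [Field K] (v : K[X])

/-- Left multiplication by `h` on `∏ᵢ K[h] tⁱ`. -/
def opH (K : Type) [Field K] : Module.End K (ℤ → K[X]) :=
  Algebra.lsmul K K (ℤ → K[X]) (X : K[X])

/-- Left multiplication by `a = t` on `∏ᵢ K[h] tⁱ`, where `t f(h) = f(h - 1) t`. -/
def opA (K : Type) [Field K] : Module.End K (ℤ → K[X]) where
  toFun F i := (F (i - 1)).comp (X - 1)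
  map_add' F G := by ext1 i; simp
  map_smul' r F := by ext1 i; simp

/-- Left multiplication by `b = v(h) t⁻¹` on `∏ᵢ K[h] tⁱ`. -/
def opB : Module.End K (ℤ → K[X]) where
  toFun F i := v * (F (i + 1)).comp (X + 1)
  map_add' F G := by ext1 i; simp [mul_add]
  map_smul' r F := by ext1 i; simp

theorem aeval_opH (f : K[X]) : aeval (opH K) f = Algebra.lsmul K K (ℤ → K[X]) f := by
  rw [opH, aeval_algHom_apply, aeval_X_left_apply]

theorem aeval_opH_sub (f : K[X]) :
    aeval (opH K - 1) f = Algebra.lsmul K K (ℤ → K[X]) (f.comp (X - 1)) := by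
  rw [opH, ← map_one (Algebra.lsmul K K (ℤ → K[X]) : K[X] →ₐ[K] _), ← map_sub,
    aeval_algHom_apply, comp_eq_aeval]

theorem opA_apply (F : ℤ → K[X]) (i : ℤ) : opA K F i = (F (i - 1)).comp (X - 1) := rfl

theorem opB_apply (F : ℤ → K[X]) (i : ℤ) : opB v F i = v * (F (i + 1)).comp (X + 1) := rfl

theorem opH_apply (F : ℤ → K[X]) (i : ℤ) : opH K F i = X * F i := rfl

theorem opA_pow_apply (F : ℤ → K[X]) (k : ℕ) (i : ℤ) :
    (opA K ^ k) F i = (F (i - k)).comp (X - C (k : K)) := by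
  induction k generalizing i with
  | zero => simp
  | succ k ih =>
    rw [pow_succ', Module.End.mul_apply, opA_apply, ih, comp_assoc]
    congr 1
    · congr 1; push_cast; ring
    · simp; ring

theorem opB_pow_apply (F : ℤ → K[X]) (k : ℕ) (i : ℤ) :
    (opB v ^ k) F i = (∏ j ∈ Finset.range k, v.comp (X + C (j : K))) *
      (F (i + k)).comp (X + C (k : K)) := by
  induction k generalizing i with
  | zero => simp
  | succ k ih =>
    rw [pow_succ', Module.End.mul_apply, opB_apply, ih, mul_comp, comp_assoc, ← mul_assoc,
      Finset.prod_range_succ', prod_comp, mul_comm v]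
    have h1 : ∀ j : ℕ, (v.comp (X + C (j : K))).comp (X + 1) =
        v.comp (X + C ((j + 1 : ℕ) : K)) := by
      intro j
      rw [comp_assoc]
      congr 1
      simp; ring
    have h2 : (X + C (k : K)).comp (X + 1) = X + C ((k + 1 : ℕ) : K) := by
      simp; ring
    have h3 : i + 1 + (k : ℤ) = i + ((k + 1 : ℕ) : ℤ) := by push_cast; ring
    simp only [h1, h2, h3, Nat.cast_zero, C_0, add_zero, comp_X]

/-- The representation of `T(v)` on `∏ᵢ K[h] tⁱ`, by left multiplication inside the skew Laurent
ring `K[h][t, t⁻¹]`. -/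
def rep : Tv K v →ₐ[K] Module.End K (ℤ → K[X]) :=
  RingQuot.liftAlgHom K ⟨FreeAlgebra.lift K ![opA K, opB v, opH K], by
    intro x y hxy
    cases hxy with
    | ha =>
      simp only [fa, fh, map_mul, map_add, map_one, FreeAlgebra.lift_ι_apply]
      refine LinearMap.ext fun F => _root_.funext fun i => ?_
      simp [opA_apply, opH_apply, Module.End.mul_apply]
      ring
    | hb =>
      simp only [fb, fh, map_mul, map_sub, map_one, FreeAlgebra.lift_ι_apply]
      refine LinearMap.ext fun F => _root_.funext fun i => ?_
      simp [opB_apply, opH_apply, Module.End.mul_apply]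
      ring
    | ba =>
      simp only [fa, fb, fh, map_mul, FreeAlgebra.lift_ι_apply, ← aeval_algHom_apply]
      refine LinearMap.ext fun F => _root_.funext fun i => ?_
      simp [opA_apply, opB_apply, Module.End.mul_apply, aeval_opH, comp_assoc]
    | ab =>
      simp only [fa, fb, fh, map_mul, FreeAlgebra.lift_ι_apply, ← aeval_algHom_apply, map_sub,
        map_one]
      refine LinearMap.ext fun F => _root_.funext fun i => ?_
      simp [opA_apply, opB_apply, Module.End.mul_apply, aeval_opH_sub, comp_assoc]⟩

theorem rep_Ta : rep v (Ta K v) = opA K := by simp [rep, Ta, fa]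
theorem rep_Tb : rep v (Tb K v) = opB v := by simp [rep, Tb, fb]
theorem rep_Th : rep v (Th K v) = opH K := by simp [rep, Th, fh]

theorem Th_mul_Ta : Th K v * Ta K v = Ta K v * (Th K v + 1) := by
  simpa [Ta, Th] using RingQuot.mkAlgHom_rel K (TvRel.ha (K := K) (v := v))

theorem Th_mul_Tb : Th K v * Tb K v = Tb K v * (Th K v - 1) := by
  simpa [Tb, Th] using RingQuot.mkAlgHom_rel K (TvRel.hb (K := K) (v := v))

theorem Tb_mul_Ta : Tb K v * Ta K v = aeval (Th K v) v := by
  have := RingQuot.mkAlgHom_rel K (TvRel.ba (K := K) (v := v))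
  rw [← aeval_algHom_apply, map_mul] at this
  exact this

theorem Ta_mul_Tb : Ta K v * Tb K v = aeval (Th K v - 1) v := by
  have := RingQuot.mkAlgHom_rel K (TvRel.ab (K := K) (v := v))
  rw [← aeval_algHom_apply, map_mul, map_sub, map_one] at this
  exact this

theorem isGWATriple_Tv : IsGWATriple 1 v (Ta K v) (Tb K v) (Th K v) where
  wx := by rw [map_one, Th_mul_Ta]
  wy := by rw [map_one, Th_mul_Tb]
  yx := Tb_mul_Ta v
  xy := by rw [Ta_mul_Tb, aeval_comp]; simp

theorem adjoin_Tv : Algebra.adjoin K (Set.range ![Ta K v, Tb K v, Th K v]) = ⊤ := by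
  have h1 : (![Ta K v, Tb K v, Th K v] : Fin 3 → Tv K v)
      = RingQuot.mkAlgHom K (TvRel K v) ∘ FreeAlgebra.ι K := by
    ext k; fin_cases k <;> rfl
  rw [h1, Set.range_comp, ← AlgHom.map_adjoin, FreeAlgebra.adjoin_range_ι, Algebra.map_top,
    AlgHom.range_eq_top]
  exact RingQuot.mkAlgHom_surjective K _

/-- The vector `φ(z) = z · 1`, the image of `z` in the skew Laurent ring. -/
def coord (z : Tv K v) : ℤ → K[X] := rep v z (Pi.single 0 1)

/-- The coefficient `v(h) v(h+1) ⋯ v(h+k-1)` of `bᵏ = (v(h) t⁻¹)ᵏ` in degree `i = -k`; it is `1`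
for `i ≥ 0`. -/
def coeffMonomial (i : ℤ) : K[X] :=
  ∏ j ∈ Finset.range (-i).toNat, v.comp (X + C (j : K))

theorem coord_monomial (i j : ℤ) (f : K[X]) :
    coord v (gwaMonomial (Ta K v) (Tb K v) i * aeval (Th K v) f) j =
      if j = i then coeffMonomial v i * f.comp (X - C (i : K)) else 0 := by
  obtain ⟨k, rfl | rfl⟩ := i.eq_nat_or_neg
  · rw [gwaMonomial_natCast, coord, map_mul, map_pow, rep_Ta, Module.End.mul_apply,
      opA_pow_apply, ← aeval_algHom_apply, rep_Th, aeval_opH]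
    by_cases h : j = k
    · simp [h, coeffMonomial]
    · simp [h, sub_eq_zero]
  · rw [gwaMonomial_neg_natCast, coord, map_mul, map_pow, rep_Tb, Module.End.mul_apply,
      opB_pow_apply, ← aeval_algHom_apply, rep_Th, aeval_opH]
    by_cases h : j = -k
    · simp [h, coeffMonomial]
    · simp [h, ← eq_neg_iff_add_eq_zero]

theorem coord_gwaNormal (F : ℤ →₀ K[X]) (j : ℤ) :
    coord v (gwaNormal (Ta K v) (Tb K v) (Th K v) F) j =
      coeffMonomial v j * (F j).comp (X - C (j : K)) := by
  induction F using Finsupp.induction_linear with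
  | zero => simp [gwaNormal, coord]
  | add F G hF hG =>
    rw [gwaNormal_add, Finsupp.add_apply, add_comp, mul_add, ← hF, ← hG]
    simp [coord]
  | single i f =>
    rw [gwaNormal_single, coord_monomial, Finsupp.single_apply]
    by_cases h : j = i
    · subst h; simp
    · simp [h, Ne.symm h]

/-- Right multiplication by `h` acts on the degree `i` component as `h - i`, because
`tⁱ h = (h - i) tⁱ`; it commutes with all left multiplications. -/
theorem coord_mul_Th (z : Tv K v) (i : ℤ) :
    coord v (z * Th K v) i = (X - C (i : K)) * coord v z i := by
  have key : ∀ F : ℤ → K[X], ∀ i : ℤ,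
      rep v z (fun i => (X - C (i : K)) * F i) i = (X - C (i : K)) * rep v z F i := by
    have hmem : z ∈ Algebra.adjoin K (Set.range ![Ta K v, Tb K v, Th K v]) :=
      adjoin_Tv v ▸ Algebra.mem_top
    induction hmem using Algebra.adjoin_induction with
    | mem u hu =>
      obtain ⟨k, rfl⟩ := hu
      intro F i
      fin_cases k
      · simp [rep_Ta, opA_apply]
      · simp [rep_Tb, opB_apply]; ring
      · simp [rep_Th, opH_apply]; ring
    | algebraMap r => intro F i; simp
    | add a b _ _ ha hb => intro F i; simp only [map_add, LinearMap.add_apply, Pi.add_apply, ha, hb, mul_add]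
    | mul a b _ _ ha hb =>
      intro F i
      rw [map_mul, Module.End.mul_apply, Module.End.mul_apply, ← ha]
      exact congrFun (congrArg _ (_root_.funext fun i => hb F i)) _
  rw [coord, coord, ← key, map_mul, Module.End.mul_apply, rep_Th]
  refine congrFun (congrArg _ (_root_.funext fun j => ?_)) _
  rw [opH_apply]
  by_cases h : j = 0
  · subst h; simp
  · simp [h]

/-- Right multiplication by `a = t` shifts the degree. -/
theorem coord_mul_Ta (z : Tv K v) (i : ℤ) :
    coord v (z * Ta K v) i = coord v z (i - 1) := by
  have key : ∀ F : ℤ → K[X], ∀ i : ℤ,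
      rep v z (fun i => F (i - 1)) i = rep v z F (i - 1) := by
    have hmem : z ∈ Algebra.adjoin K (Set.range ![Ta K v, Tb K v, Th K v]) :=
      adjoin_Tv v ▸ Algebra.mem_top
    induction hmem using Algebra.adjoin_induction with
    | mem u hu =>
      obtain ⟨k, rfl⟩ := hu
      intro F i
      fin_cases k
      · simp [rep_Ta, opA_apply]
      · simp [rep_Tb, opB_apply]
      · simp [rep_Th, opH_apply]
    | algebraMap r => intro F i; simp
    | add a b _ _ ha hb => intro F i; simp [ha, hb]
    | mul a b _ _ ha hb =>
      intro F i
      rw [map_mul, Module.End.mul_apply, Module.End.mul_apply, ← ha]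
      exact congrFun (congrArg _ (_root_.funext fun i => hb F i)) _
  rw [coord, coord, ← key, map_mul, Module.End.mul_apply, rep_Ta]
  refine congrFun (congrArg _ (_root_.funext fun j => ?_)) _
  rw [opA_apply]
  by_cases h : j - 1 = 0
  · simp [h]
  · simp [h]

theorem coord_Th_mul (z : Tv K v) (i : ℤ) : coord v (Th K v * z) i = X * coord v z i := by
  rw [coord, map_mul, Module.End.mul_apply, rep_Th, opH_apply, coord]

theorem coord_Ta_mul (z : Tv K v) (i : ℤ) :
    coord v (Ta K v * z) i = (coord v z (i - 1)).comp (X - 1) := by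
  rw [coord, map_mul, Module.End.mul_apply, rep_Ta, opA_apply, coord]

variable {v}

theorem coeffMonomial_ne_zero (hv : v.Monic) (i : ℤ) : coeffMonomial v i ≠ 0 :=
  (monic_prod_of_monic _ _ fun _ _ => hv.comp_X_add_C _).ne_zero

/-- The product `v(h) ⋯ v(h+k-1)` is translation invariant when `k = 0` in `K`, since the
translation replaces the factor `v(h)` by `v(h+k)`. -/
theorem coeffMonomial_comp (hv : v.Monic) (i : ℤ) (hi : (i : K) = 0) :
    (coeffMonomial v i).comp (X + 1) = coeffMonomial v i := by
  have hk : (((-i).toNat : ℕ) : K) = 0 := by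
    rcases le_total i 0 with h | h
    · have : (((-i).toNat : ℤ) : K) = ((-i : ℤ) : K) := by rw [Int.toNat_of_nonneg (by omega)]
      rw [Int.cast_natCast] at this
      rw [this, Int.cast_neg, hi, neg_zero]
    · rw [Int.toNat_of_nonpos (by omega), Nat.cast_zero]
  refine mul_right_cancel₀ hv.ne_zero ?_
  have h1 := Finset.prod_range_succ (fun j : ℕ => v.comp (X + C (j : K))) (-i).toNat
  have h2 := Finset.prod_range_succ' (fun j : ℕ => v.comp (X + C (j : K))) (-i).toNat
  rw [hk] at h1
  simp only [Nat.cast_zero, C_0, add_zero, comp_X] at h1 h2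
  rw [coeffMonomial, ← h1, h2, prod_comp]
  refine congrArg (· * v) (Finset.prod_congr rfl fun j _ => ?_)
  rw [comp_assoc]
  congr 1
  simp; ring

theorem comp_X_sub_C_eq_zero {f : K[X]} {r : K} (h : f.comp (X - C r) = 0) : f = 0 := by
  have := congrArg (fun g : K[X] => g.comp (X + C r)) h
  simpa [comp_assoc] using this

/-- The coefficients of a central element live in degrees divisible by the characteristic and are
invariant under translation. -/
theorem central_coeff (hv : v.Monic) (F : ℤ →₀ K[X])
    (hz : gwaNormal (Ta K v) (Tb K v) (Th K v) F ∈ Subalgebra.center K (Tv K v)) (i : ℤ)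
    (hi : F i ≠ 0) : (i : K) = 0 ∧ (F i).comp (X + 1) = F i := by
  rw [Subalgebra.mem_center_iff] at hz
  set z := gwaNormal (Ta K v) (Tb K v) (Th K v) F with hzF
  have hci := coord_gwaNormal v F i
  rw [← hzF] at hci
  have hne : coord v z i ≠ 0 := by
    rw [hci]
    exact mul_ne_zero (coeffMonomial_ne_zero hv i) fun h => hi (comp_X_sub_C_eq_zero h)
  have hi0 : (i : K) = 0 := by
    have h1 := coord_mul_Th v z i
    rw [← hz, coord_Th_mul] at h1
    have h2 := mul_right_cancel₀ hne h1
    rwa [eq_comm, sub_eq_self, C_eq_zero] at h2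
  refine ⟨hi0, ?_⟩
  have h1 := coord_mul_Ta v z (i + 1)
  rw [← hz, coord_Ta_mul, add_sub_cancel_right] at h1
  rw [hi0, C_0, sub_zero, comp_X] at hci
  have h2 := congrArg (fun g : K[X] => g.comp (X + 1)) h1
  simp only [comp_assoc] at h2
  rw [hci] at h2
  simp only [sub_comp, X_comp, one_comp, add_sub_cancel_right, comp_X, mul_comp,
    coeffMonomial_comp hv i hi0] at h2
  exact (mul_left_cancel₀ (coeffMonomial_ne_zero hv i) h2).symm

end Representation

/-! ### The central elements -/

section Center

variable {K : Type} [Field K] {p : ℕ} [Fact p.Prime] [CharP K p] {v : K[X]}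

theorem mem_center_of_commute (z : Tv K v) (ha : Ta K v * z = z * Ta K v)
    (hb : Tb K v * z = z * Tb K v) (hh : Th K v * z = z * Th K v) :
    z ∈ Subalgebra.center K (Tv K v) := by
  have hle : Algebra.adjoin K (Set.range ![Ta K v, Tb K v, Th K v]) ≤
      Subalgebra.centralizer K {z} := by
    refine Algebra.adjoin_le ?_
    rintro _ ⟨k, rfl⟩
    rw [SetLike.mem_coe, Subalgebra.mem_centralizer_iff]
    rintro _ rfl
    fin_cases k
    · exact ha.symm
    · exact hb.symm
    · exact hh.symm
  rw [adjoin_Tv] at hle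
  rw [Subalgebra.mem_center_iff]
  intro u
  have := Subalgebra.mem_centralizer_iff K |>.mp (hle (Algebra.mem_top (x := u))) z rfl
  exact this.symm

theorem Ta_pow_mem_center (v : K[X]) : Ta K v ^ p ∈ Subalgebra.center K (Tv K v) := by
  have h := isGWATriple_Tv v
  refine mem_center_of_commute _ (pow_mul_comm' _ _).symm ?_ ?_
  · obtain ⟨q, hq⟩ : ∃ q, p = q + 1 := ⟨p - 1, by have := (Fact.out : p.Prime).pos; omega⟩
    have hqK : (q : K) = -1 := by
      have := CharP.cast_eq_zero K p
      rw [hq] at this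
      push_cast at this
      exact eq_neg_of_add_eq_zero_left this
    rw [hq]
    conv_lhs => rw [pow_succ', ← mul_assoc, h.yx, h.aeval_mul_x_pow]
    conv_rhs => rw [pow_succ, mul_assoc, h.xy]
    rw [hqK]
    congr 4
    simp
  · have := h.aeval_mul_x_pow X p
    simpa using this

theorem Tb_pow_mem_center (v : K[X]) : Tb K v ^ p ∈ Subalgebra.center K (Tv K v) := by
  have h := isGWATriple_Tv v
  refine mem_center_of_commute _ ?_ (pow_mul_comm' _ _).symm ?_
  · obtain ⟨q, hq⟩ : ∃ q, p = q + 1 := ⟨p - 1, by have := (Fact.out : p.Prime).pos; omega⟩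
    have hqK : (q : K) = -1 := by
      have := CharP.cast_eq_zero K p
      rw [hq] at this
      push_cast at this
      exact eq_neg_of_add_eq_zero_left this
    rw [hq]
    conv_lhs => rw [pow_succ', ← mul_assoc, h.xy, h.aeval_mul_y_pow]
    conv_rhs => rw [pow_succ, mul_assoc, h.yx]
    rw [hqK, comp_assoc]
    congr 2
    simp
  · have := h.aeval_mul_y_pow X p
    simpa using this

theorem Th_pow_sub_eq {K : Type} [Field K] {p : ℕ} (v : K[X]) : Th K v ^ p - Th K v = aeval (Th K v) (X ^ p - X : K[X]) := by
  simp

theorem Th_pow_sub_mem_center (v : K[X]) :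
    Th K v ^ p - Th K v ∈ Subalgebra.center K (Tv K v) := by
  have h := isGWATriple_Tv v
  have h1 := artinSchreier_comp_add (K := K) (p := p) 1
  have h2 := artinSchreier_comp_sub (K := K) (p := p) 1
  rw [Nat.cast_one] at h1 h2
  refine mem_center_of_commute _ ?_ ?_ ?_
  · rw [Th_pow_sub_eq, h.aeval_mul_x, h1]
  · rw [Th_pow_sub_eq, h.aeval_mul_y, h2]
  · rw [mul_sub, sub_mul, pow_mul_comm']

/-- The defining relation `A B = H ^ n` holds among the central elements: `b ^ p a ^ p` is the
product of all translates of `v(h)` by the prime field. -/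
theorem Ta_pow_mul_Tb_pow [IsAlgClosed K] (hmonic : v.Monic)
    (hroots : ∀ x : K, v.IsRoot x → ∃ m : ℕ, (m : K) = x) :
    Ta K v ^ p * Tb K v ^ p = (Th K v ^ p - Th K v) ^ v.natDegree := by
  have h1 := (isGWATriple_Tv v).y_pow_mul_x_pow p
  simp only [mul_one] at h1
  rw [prod_comp_translates v hmonic hroots] at h1
  rw [← Subalgebra.mem_center_iff.mp (Ta_pow_mem_center v), h1, map_pow, Th_pow_sub_eq]

/-- The coordinate vector of a normal form in `a ^ p`, `b ^ p`, `h ^ p - h`, in degree `p k`. -/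
theorem coord_gwaNormal_pow (G : ℤ →₀ K[X]) (k : ℤ) :
    coord v (gwaNormal (Ta K v ^ p) (Tb K v ^ p) (Th K v ^ p - Th K v) G) (p * k) =
      coeffMonomial v (p * k) * (G k).comp (X ^ p - X) := by
  induction G using Finsupp.induction_linear with
  | zero => simp [gwaNormal, coord]
  | add F G hF hG =>
    rw [gwaNormal_add, Finsupp.add_apply, add_comp, mul_add, ← hF, ← hG]
    simp [coord]
  | single i f =>
    have hp : (p : ℤ) ≠ 0 := by exact_mod_cast (Fact.out : p.Prime).ne_zero
    rw [gwaNormal_single, Th_pow_sub_eq, ← aeval_comp, gwaMonomial_pow, coord_monomial,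
      Finsupp.single_apply]
    by_cases h : k = i
    · subst h; simp
    · rw [if_neg (fun hki => h (mul_left_cancel₀ hp hki)), if_neg (Ne.symm h), zero_comp, mul_zero]

end Center

/-! ### The Kleinian singularity -/

section Kleinian

/-- The relation ideal of the Kleinian singularity of type `A_{n-1}`. -/
abbrev kleinianIdeal (K : Type) [Field K] (n : ℕ) : Ideal (MvPolynomial (Fin 3) K) :=
  Ideal.span {MvPolynomial.X 0 * MvPolynomial.X 1 - MvPolynomial.X 2 ^ n}

/-- The coordinate functions `A`, `B`, `H` on the Kleinian singularity. -/
abbrev kleinianVar (K : Type) [Field K] (n : ℕ) (k : Fin 3) :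
    MvPolynomial (Fin 3) K ⧸ kleinianIdeal K n :=
  Ideal.Quotient.mk (kleinianIdeal K n) (MvPolynomial.X k)

variable (K : Type) [Field K] (n : ℕ)

theorem kleinian_rel : kleinianVar K n 0 * kleinianVar K n 1 = kleinianVar K n 2 ^ n := by
  rw [← map_mul, ← map_pow, Ideal.Quotient.eq]
  exact Ideal.subset_span rfl

theorem isGWATriple_kleinian :
    IsGWATriple (0 : K) (X ^ n) (kleinianVar K n 0) (kleinianVar K n 1) (kleinianVar K n 2) where
  wx := by rw [map_zero, add_zero, mul_comm]
  wy := by rw [map_zero, sub_zero, mul_comm]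
  yx := by rw [mul_comm, kleinian_rel, map_pow, aeval_X]
  xy := by rw [kleinian_rel, C_0, sub_zero, comp_X, map_pow, aeval_X]

theorem adjoin_kleinian :
    Algebra.adjoin K (Set.range ![kleinianVar K n 0, kleinianVar K n 1, kleinianVar K n 2]) =
      ⊤ := by
  have h1 : ![kleinianVar K n 0, kleinianVar K n 1, kleinianVar K n 2]
      = Ideal.Quotient.mkₐ K (kleinianIdeal K n) ∘ MvPolynomial.X := by
    ext k; fin_cases k <;> rfl
  rw [h1, Set.range_comp, ← AlgHom.map_adjoin, MvPolynomial.adjoin_range_X, Algebra.map_top,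
    AlgHom.range_eq_top]
  exact Ideal.Quotient.mkₐ_surjective K _

end Kleinian

/-! ### The isomorphism -/

section CenterMap

variable {K : Type} [Field K] {p : ℕ} [Fact p.Prime] [CharP K p] [IsAlgClosed K] {v : K[X]}

/-- The algebra map `A ↦ a ^ p`, `B ↦ b ^ p`, `H ↦ h ^ p - h` from the functions on the Kleinian
singularity to the centre of `T(v)`. -/
def centerMap (p : ℕ) [Fact p.Prime] [CharP K p] (hmonic : v.Monic)
    (hroots : ∀ x : K, v.IsRoot x → ∃ m : ℕ, (m : K) = x) :
    (MvPolynomial (Fin 3) K ⧸ kleinianIdeal K v.natDegree) →ₐ[K] Subalgebra.center K (Tv K v) :=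
  Ideal.Quotient.liftₐ _ (MvPolynomial.aeval
    ![⟨Ta K v ^ p, Ta_pow_mem_center v⟩, ⟨Tb K v ^ p, Tb_pow_mem_center v⟩,
      ⟨Th K v ^ p - Th K v, Th_pow_sub_mem_center v⟩]) (by
    intro f hf
    rw [← RingHom.mem_ker]
    revert f
    change kleinianIdeal K v.natDegree ≤ _
    rw [Ideal.span_le, Set.singleton_subset_iff, SetLike.mem_coe, RingHom.mem_ker]
    refine Subtype.ext ?_
    simp [Ta_pow_mul_Tb_pow hmonic hroots])

variable (hmonic : v.Monic) (hroots : ∀ x : K, v.IsRoot x → ∃ m : ℕ, (m : K) = x)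

theorem centerMap_A : (centerMap p hmonic hroots (kleinianVar K _ 0) : Tv K v) = Ta K v ^ p := by
  exact congrArg Subtype.val (MvPolynomial.aeval_X _ 0)

theorem centerMap_B : (centerMap p hmonic hroots (kleinianVar K _ 1) : Tv K v) = Tb K v ^ p := by
  exact congrArg Subtype.val (MvPolynomial.aeval_X _ 1)

theorem centerMap_H :
    (centerMap p hmonic hroots (kleinianVar K _ 2) : Tv K v) = Th K v ^ p - Th K v := by
  exact congrArg Subtype.val (MvPolynomial.aeval_X _ 2)

theorem centerMap_gwaNormal (G : ℤ →₀ K[X]) :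
    (centerMap p hmonic hroots (gwaNormal (kleinianVar K _ 0) (kleinianVar K _ 1)
      (kleinianVar K _ 2) G) : Tv K v) =
      gwaNormal (Ta K v ^ p) (Tb K v ^ p) (Th K v ^ p - Th K v) G := by
  have := map_gwaNormal ((Subalgebra.center K (Tv K v)).val.comp (centerMap p hmonic hroots))
    (kleinianVar K _ 0) (kleinianVar K _ 1) (kleinianVar K _ 2) G
  simp only [AlgHom.comp_apply, Subalgebra.coe_val, centerMap_A, centerMap_B, centerMap_H] at this
  exact this

/-- The coordinates of the image of a normal form determine its coefficients. -/
theorem centerMap_injective : Function.Injective (centerMap p hmonic hroots) := by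
  rw [injective_iff_map_eq_zero]
  intro q hq
  obtain ⟨G, rfl⟩ := (isGWATriple_kleinian K v.natDegree).exists_gwaNormal (adjoin_kleinian K _) q
  have h0 := centerMap_gwaNormal (p := p) hmonic hroots G
  rw [hq, ZeroMemClass.coe_zero] at h0
  have hp := (Fact.out : p.Prime)
  have hG : G = 0 := by
    ext1 k
    have h1 := coord_gwaNormal_pow (p := p) (v := v) G k
    rw [← h0, eq_comm] at h1
    simp only [coord, map_zero, LinearMap.zero_apply, Pi.zero_apply] at h1
    have h2 := (mul_eq_zero.mp h1).resolve_left (coeffMonomial_ne_zero hmonic _)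
    rw [Finsupp.zero_apply]
    refine (comp_eq_zero_iff.mp h2).resolve_right fun h => ?_
    -- `X ^ p - X` is not constant
    have h3 := FiniteField.X_pow_card_sub_X_natDegree_eq K hp.one_lt
    rw [h.2, natDegree_C] at h3
    exact hp.ne_zero h3.symm
  simp [hG, gwaNormal]

/-- A central element has a normal form `∑ uᵢ fᵢ(h)` with `p ∣ i` and `fᵢ` a polynomial in
`h ^ p - h`, so each of its terms is in the image. -/
theorem centerMap_surjective : Function.Surjective (centerMap p hmonic hroots) := by
  rintro ⟨z, hz⟩
  suffices h : z ∈ ((Subalgebra.center K (Tv K v)).val.comp (centerMap p hmonic hroots)).range by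
    obtain ⟨q, hq⟩ := h
    exact ⟨q, Subtype.ext hq⟩
  obtain ⟨F, rfl⟩ := (isGWATriple_Tv v).exists_gwaNormal (adjoin_Tv v) z
  refine Subalgebra.sum_mem _ fun i hi => ?_
  obtain ⟨hi0, hinv⟩ := central_coeff hmonic F hz i (Finsupp.mem_support_iff.mp hi)
  obtain ⟨g, hg⟩ := exists_comp_of_comp_add_one (p := p) (F i) hinv
  obtain ⟨k, rfl⟩ := (CharP.intCast_eq_zero_iff K p i).mp hi0
  refine ⟨gwaNormal (kleinianVar K _ 0) (kleinianVar K _ 1) (kleinianVar K _ 2)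
    (Finsupp.single k g), ?_⟩
  refine (centerMap_gwaNormal hmonic hroots _).trans ?_
  rw [gwaNormal_single, gwaMonomial_pow, Th_pow_sub_eq, ← aeval_comp, hg]

end CenterMap

/-!
STATEMENT 6: The centre of `T(v)` is isomorphic as a `K`-algebra to
`K[A,B,H]/(AB − H^n)` via `A ↦ a^p`, `B ↦ b^p`, `H ↦ h^p − h`.
We model `K[A,B,H]` as `MvPolynomial (Fin 3) K` with `A = X 0`, `B = X 1`, `H = X 2`.
-/

theorem statement_6 (K : Type) [Field K] (p n : ℕ) [Fact p.Prime] [CharP K p]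
    [IsAlgClosed K] (hn : 0 < n) (hpn : Nat.Coprime p n)
    (v : K[X]) (hmonic : v.Monic) (hdeg : v.natDegree = n)
    (hroots : ∀ x : K, v.IsRoot x → ∃ m : ℕ, (m : K) = x) :
    ∃ e : (MvPolynomial (Fin 3) K ⧸
        (Ideal.span {MvPolynomial.X 0 * MvPolynomial.X 1 - MvPolynomial.X 2 ^ n} :
          Ideal (MvPolynomial (Fin 3) K))) ≃ₐ[K]
        Subalgebra.center K (Tv K v),
      ((e (Ideal.Quotient.mk
          (Ideal.span {MvPolynomial.X 0 * MvPolynomial.X 1 - MvPolynomial.X 2 ^ n})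
          (MvPolynomial.X 0)) : Tv K v) = Ta K v ^ p) ∧
      ((e (Ideal.Quotient.mk
          (Ideal.span {MvPolynomial.X 0 * MvPolynomial.X 1 - MvPolynomial.X 2 ^ n})
          (MvPolynomial.X 1)) : Tv K v) = Tb K v ^ p) ∧
      ((e (Ideal.Quotient.mk
          (Ideal.span {MvPolynomial.X 0 * MvPolynomial.X 1 - MvPolynomial.X 2 ^ n})
          (MvPolynomial.X 2)) : Tv K v) = Th K v ^ p - Th K v) := by
  subst hdeg
  exact ⟨AlgEquiv.ofBijective (centerMap p hmonic hroots)
    ⟨centerMap_injective hmonic hroots, centerMap_surjective hmonic hroots⟩,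
    centerMap_A hmonic hroots, centerMap_B hmonic hroots, centerMap_H hmonic hroots⟩
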